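/- (Main shock-formation criterion.) Let λ > 0 and let r₀ : ℝ → ℝ be bounded and C¹ with bounded derivative, with r₀(+∞) := lim_{x→+∞} r₀(x) finite, and set δ := k(2·sup|r₀|). Suppose α ∈ ℝ satisfies: r₀'(α)·(r₀(α) + r₀(+∞)) < 0, r₀'(x)·r₀(α) < 0 for every x ≥ α, and either r₀(α)·r₀(+∞) > 0 or r₀(+∞) = 0. Suppose there exists t_c > 0 solving 1 − (2/λ)·(1 − A(t_c)⁻¹)·γ⁺(t_c)·|r₀'(α)|·√(k(2r₀(α))) = 0, where γ⁺(t) := min{ |f(η_L⁺(t,α))|, |f(2r₀(α))| }, and that −2(A(t) − 1)/√(k(η_L⁺(t,α))) + (2 − A(t)⁻¹)/√(k(2r₀(α))) ≥ 0 for every t ∈ [0, t_c]. Then a singularity forms by time t_c: there is no C² solution (r,ℓ) of the diagonal system on [0,T) × ℝ with initial data (r₀, −r₀), satisfying |r(t,x) − ℓ(t,y)| ≤ 2·sup|r₀| for all t, x, y and admitting jointly C¹ characteristic flows x₁, x₂ with ∂_α x₁ > 0, ∂_β x₂ > 0 and a C¹ correspondence map β(t,α), for any T > t_c. -/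

import Mathlib

open Real Set Filter MeasureTheory

noncomputable section

/-- `L(u) = (1/2)(u·√(1+u²) + arcsinh u)`, the antiderivative of `Q(ξ) = √(1+ξ²)` with `L 0 = 0`. -/
def Lfun (u : ℝ) : ℝ := (1/2) * (u * Real.sqrt (1 + u^2) + Real.arsinh u)

/-- `û₁(η) = L⁻¹(−η/2)`. -/
def u1hat (η : ℝ) : ℝ := Function.invFun Lfun (-η/2)

/-- `k(η) = √(1 + û₁(η)²)`. -/
def kfun (η : ℝ) : ℝ := Real.sqrt (1 + (u1hat η)^2)

/-- `f(η) = k'(η)/√(k(η))`. -/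
def ffun (η : ℝ) : ℝ := deriv kfun η / Real.sqrt (kfun η)

/-- `A(t) = exp(λ t / 2)`. -/
def Afun (lam t : ℝ) : ℝ := Real.exp (lam * t / 2)

/-- `η(t,x) = r(t,x) − ℓ(t,x)`. -/
def etafun (r l : ℝ → ℝ → ℝ) (t x : ℝ) : ℝ := r t x - l t x

/-- Weighted Riemann derivative `p(t,x) = A(t)·√(k(η(t,x)))·∂ₓr(t,x)`. -/
def pfun (lam : ℝ) (r l : ℝ → ℝ → ℝ) (t x : ℝ) : ℝ :=
  Afun lam t * Real.sqrt (kfun (etafun r l t x)) * deriv (fun y => r t y) x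

/-- Weighted Riemann derivative `q(t,x) = A(t)·√(k(η(t,x)))·∂ₓℓ(t,x)`. -/
def qfun (lam : ℝ) (r l : ℝ → ℝ → ℝ) (t x : ℝ) : ℝ :=
  Afun lam t * Real.sqrt (kfun (etafun r l t x)) * deriv (fun y => l t y) x

/-!
By the symmetry `(r, ℓ) ↦ (-r, -ℓ)` assume `r₀(α) > 0`, so that `r₀` decreases on `[α, ∞)` and
stays nonnegative there. A maximum principle on the region between the forward characteristic
`x₁(·, α)` and the line of speed `-δ` ending at `B = α + 2δt_c` propagates the signs `∂ₓr ≤ 0 ≤ ∂ₓℓ`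
and the bounds `r ≥ r₀(B)`, `ℓ ≤ -r₀(B)` from the initial data. Hence `η` decreases along the
characteristic from `2r₀(α)`, but not below `η_L⁺(t_c)`, and since `f` increases and then decreases
on `[0, ∞)`, `f(η) ≥ γ⁺(t_c)` throughout.

The weighted gradient `p = A √k ∂ₓr` solves `p' = -f(η) A⁻¹ p² - (λ/2) q` with `q = A √k ∂ₓℓ ≥ 0`,
so the damping coupling has a favourable sign and `p' ≤ -γ⁺(t_c) A⁻¹ p²`. Integrating
`(1/p)' ≥ γ⁺(t_c) A⁻¹` brings the negative quantity `1/p` to `0` no later than the root `t_c`.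
-/

open scoped Topology

section Calculus

theorem hasDerivWithinAt_Iio_nonneg_of_le {g : ℝ → ℝ} {d t : ℝ}
    (hg : HasDerivWithinAt g d (Iio t) t) (hle : ∀ᶠ s in 𝓝[<] t, g s ≤ g t) : 0 ≤ d := by
  rw [hasDerivWithinAt_iff_tendsto_slope' (by simp)] at hg
  refine ge_of_tendsto hg ?_
  filter_upwards [hle, self_mem_nhdsWithin] with s hs hst
  rw [slope_def_field]
  exact div_nonneg_of_nonpos (sub_nonpos.2 hs) (sub_nonpos.2 (mem_Iio.1 hst).le)

theorem le_of_deriv_nonpos_of_tendsto {g : ℝ → ℝ} {a L : ℝ} (hg : DifferentiableOn ℝ g (Ici a))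
    (hderiv : ∀ x ∈ Ioi a, deriv g x ≤ 0) (hlim : Tendsto g atTop (𝓝 L)) {x : ℝ} (hx : a ≤ x) :
    L ≤ g x := by
  have hanti : AntitoneOn g (Ici a) :=
    antitoneOn_of_deriv_nonpos (convex_Ici a) hg.continuousOn (hg.mono interior_subset)
      (by simpa only [interior_Ici] using hderiv)
  refine le_of_tendsto hlim ?_
  filter_upwards [eventually_ge_atTop x] with y hy using hanti hx (hx.trans hy) hy

theorem isCompact_setOf_mem_Icc {Y : Type*} [TopologicalSpace Y] [T2Space Y] {K : Set Y}
    (hK : IsCompact K) {f g : Y → ℝ} (hf : ContinuousOn f K) (hg : ContinuousOn g K) :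
    IsCompact {p : Y × ℝ | p.1 ∈ K ∧ p.2 ∈ Icc (f p.1) (g p.1)} := by
  obtain ⟨m, hm⟩ := hK.bddBelow_image hf
  obtain ⟨M, hM⟩ := hK.bddAbove_image hg
  have hclosed : IsClosed (K ×ˢ (univ : Set ℝ)) := hK.isClosed.prod isClosed_univ
  have hfst : MapsTo Prod.fst (K ×ˢ (univ : Set ℝ)) K := fun p hp => hp.1
  have hlower := hclosed.isClosed_le (hf.comp continuousOn_fst hfst) continuousOn_snd
  have hupper := hclosed.isClosed_le continuousOn_snd (hg.comp continuousOn_fst hfst)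
  refine (hK.prod (isCompact_Icc (a := m) (b := M))).of_isClosed_subset ?_ ?_
  · convert hlower.inter hupper using 1
    ext p
    simp only [mem_ofPred_eq, mem_Icc, mem_inter_iff, mem_prod, mem_univ, Function.comp_apply]
    tauto
  · rintro p ⟨hp, hfp, hpg⟩
    exact ⟨hp, (hm (mem_image_of_mem f hp)).trans hfp, hpg.trans (hM (mem_image_of_mem g hp))⟩

/- The weight `exp (-(K + 1) s)` makes a positive maximum strictly decreasing along the curve that
reaches it. -/
theorem nonpos_of_backward_curve {ι E : Type*} [Finite ι] [TopologicalSpace E] {D : Set (ℝ × E)}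
    (hD : IsCompact D) {u : ι → ℝ × E → ℝ} (hu : ∀ i, ContinuousOn (u i) D) {K : ℝ}
    (hcurve : ∀ i, ∀ p ∈ D, 0 < u i p → (∀ j, u j p ≤ u i p) →
      ∃ (γ : ℝ → E) (d : ℝ), γ p.1 = p.2 ∧ (∀ᶠ s in 𝓝[<] p.1, (s, γ s) ∈ D) ∧
        HasDerivWithinAt (fun s => u i (s, γ s)) d (Iio p.1) p.1 ∧ d ≤ K * u i p)
    (i : ι) {p : ℝ × E} (hp : p ∈ D) : u i p ≤ 0 := by
  by_contra! hpos
  have := Nonempty.intro i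
  let e : ℝ → ℝ := fun s => exp (-(K + 1) * s)
  have hw (j : ι) : ContinuousOn (fun q => e q.1 * u j q) D :=
    (by fun_prop : Continuous fun q : ℝ × E => e q.1).continuousOn.mul (hu j)
  choose q hqD hqmax using fun j => hD.exists_isMaxOn ⟨p, hp⟩ (hw j)
  obtain ⟨k, hk⟩ := Finite.exists_max fun j => e (q j).1 * u j (q j)
  have hmax (j : ι) {z : ℝ × E} (hz : z ∈ D) : e z.1 * u j z ≤ e (q k).1 * u k (q k) :=
    (hqmax j hz).trans (hk j)
  have hukpos : 0 < u k (q k) :=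
    pos_of_mul_pos_right ((mul_pos (exp_pos _) hpos).trans_le (hmax i hp)) (exp_pos _).le
  obtain ⟨γ, d, hγ, hγD, hd, hdle⟩ := hcurve k (q k) (hqD k) hukpos fun j =>
    le_of_mul_le_mul_left (hmax j (hqD k)) (exp_pos _)
  have hweighted := (((hasDerivAt_id (q k).1).const_mul (-(K + 1))).exp.hasDerivWithinAt).mul hd
  have hnonneg := hasDerivWithinAt_Iio_nonneg_of_le hweighted <| hγD.mono fun s hs => by
    simpa only [Pi.mul_apply, id, hγ] using hmax k hs
  simp only [id, hγ, mul_one] at hnonneg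
  nlinarith [exp_pos (-(K + 1) * (q k).1)]

/- `1 / P - G` is nondecreasing and `1 / P` stays negative. -/
theorem mul_neg_lt_one_of_riccati {P P' G g : ℝ → ℝ} {a b : ℝ} (hab : a ≤ b)
    (hP : ContinuousOn P (Icc a b)) (hG : ContinuousOn G (Icc a b))
    (hP' : ∀ s ∈ Ioo a b, HasDerivAt P (P' s) s) (hG' : ∀ s ∈ Ioo a b, HasDerivAt G (g s) s)
    (hg : ∀ s ∈ Ioo a b, 0 ≤ g s) (hle : ∀ s ∈ Ioo a b, P' s ≤ -(g s * P s ^ 2))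
    (hPa : P a < 0) : (G b - G a) * -P a < 1 := by
  have hanti : AntitoneOn P (Icc a b) := by
    refine antitoneOn_of_hasDerivWithinAt_nonpos (f' := P') (convex_Icc a b) hP ?_ ?_ <;>
      rw [interior_Icc]
    · exact fun s hs => (hP' s hs).hasDerivWithinAt
    · exact fun s hs => (hle s hs).trans (neg_nonpos.2 (mul_nonneg (hg s hs) (sq_nonneg _)))
  have hneg : ∀ s ∈ Icc a b, P s < 0 := fun s hs =>
    (hanti (left_mem_Icc.2 hab) hs hs.1).trans_lt hPa
  have hmono : MonotoneOn (fun s => (P s)⁻¹ - G s) (Icc a b) := by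
    refine monotoneOn_of_hasDerivWithinAt_nonneg (f' := fun s => -P' s / P s ^ 2 - g s)
      (convex_Icc a b) ((hP.inv₀ fun s hs => (hneg s hs).ne).sub hG) ?_ ?_ <;>
      rw [interior_Icc]
    · exact fun s hs => (((hP' s hs).inv (hneg s (Ioo_subset_Icc_self hs)).ne).sub
        (hG' s hs)).hasDerivWithinAt
    · intro s hs
      rw [sub_nonneg, le_div_iff₀ (sq_pos_of_neg (hneg s (Ioo_subset_Icc_self hs)))]
      linarith [hle s hs]
  have hends := hmono (left_mem_Icc.2 hab) (right_mem_Icc.2 hab) hab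
  have hPb : (P b)⁻¹ < 0 := inv_lt_zero.2 (hneg b (right_mem_Icc.2 hab))
  calc (G b - G a) * -P a < -(P a)⁻¹ * -P a :=
        mul_lt_mul_of_pos_right (by linarith) (neg_pos.2 hPa)
    _ = 1 := by rw [neg_mul_neg, inv_mul_cancel₀ hPa.ne]

/- Differentiate `Du(V) = g` in the direction `w` and use the symmetry of `D²u`. -/
theorem fderiv_fderiv_apply_of_transport {E F : Type*} [NormedAddCommGroup E] [NormedSpace ℝ E]
    [NormedAddCommGroup F] [NormedSpace ℝ F] {u : E → F} {V : E → E} {g : E → F} {p : E}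
    (hu : ContDiffAt ℝ 2 u p) (hV : DifferentiableAt ℝ V p)
    (htransport : ∀ᶠ q in 𝓝 p, fderiv ℝ u q (V q) = g q) (w : E) :
    fderiv ℝ (fun q => fderiv ℝ u q w) p (V p)
      = fderiv ℝ g p w - fderiv ℝ u p (fderiv ℝ V p w) := by
  have hDu : DifferentiableAt ℝ (fderiv ℝ u) p :=
    (hu.fderiv_right (m := 1) le_rfl).differentiableAt one_ne_zero
  have hsymm : fderiv ℝ (fderiv ℝ u) p (V p) w = fderiv ℝ (fderiv ℝ u) p w (V p) :=
    hu.isSymmSndFDerivAt (by simp) _ _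
  have hg : fderiv ℝ (fun q => fderiv ℝ u q (V q)) p = fderiv ℝ g p :=
    Filter.EventuallyEq.fderiv_eq htransport
  rw [← hg, fderiv_clm_apply hDu hV, fderiv_clm_apply hDu (differentiableAt_const w)]
  simp [hsymm]

end Calculus

section SoundSpeed

theorem hasDerivAt_Lfun (u : ℝ) : HasDerivAt Lfun (√(1 + u ^ 2)) u := by
  have hpos : 0 < 1 + u ^ 2 := by positivity
  have hsq : HasDerivAt (fun u : ℝ => 1 + u ^ 2) (2 * u) u := by
    simpa using (hasDerivAt_pow 2 u).const_add 1
  have hL : HasDerivAt Lfun _ u :=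
    (((hasDerivAt_id u).mul (hsq.sqrt hpos.ne')).add (hasDerivAt_arsinh u)).const_mul (1 / 2 : ℝ)
  convert hL using 1
  have hsqrt := (sqrt_pos.2 hpos).ne'
  simp only [id]
  field_simp
  linarith [sq_sqrt hpos.le]

theorem continuous_Lfun : Continuous Lfun :=
  continuous_iff_continuousAt.2 fun u => (hasDerivAt_Lfun u).continuousAt

theorem strictMono_Lfun : StrictMono Lfun :=
  strictMono_of_deriv_pos fun u => by
    rw [(hasDerivAt_Lfun u).deriv]
    positivity

theorem Lfun_neg (u : ℝ) : Lfun (-u) = -Lfun u := by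
  simp only [Lfun, arsinh_neg, neg_sq]
  ring

theorem half_le_Lfun {u : ℝ} (hu : 0 ≤ u) : u / 2 ≤ Lfun u := by
  have harsinh : 0 ≤ arsinh u := arsinh_nonneg_iff.2 hu
  have hsqrt : u * 1 ≤ u * √(1 + u ^ 2) :=
    mul_le_mul_of_nonneg_left (one_le_sqrt.2 (by nlinarith)) hu
  unfold Lfun
  linarith

theorem surjective_Lfun : Function.Surjective Lfun := by
  have hhalf : Tendsto (fun u : ℝ => u / 2) atTop atTop := tendsto_id.atTop_div_const two_pos
  have htop : Tendsto Lfun atTop atTop :=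
    tendsto_atTop_mono' atTop
      ((eventually_ge_atTop 0).mono fun _ hu => half_le_Lfun hu) hhalf
  have hbot : Tendsto Lfun atBot atBot := by
    simpa [Function.comp_def, Lfun_neg] using
      tendsto_neg_atTop_atBot.comp (htop.comp tendsto_neg_atBot_atTop)
  exact continuous_Lfun.surjective htop hbot

theorem Lfun_u1hat (η : ℝ) : Lfun (u1hat η) = -η / 2 :=
  Function.invFun_eq (surjective_Lfun _)

theorem u1hat_Lfun (u : ℝ) : u1hat (-2 * Lfun u) = u :=
  strictMono_Lfun.injective <| by rw [Lfun_u1hat]; ring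

theorem antitone_u1hat : Antitone u1hat := fun a b hab =>
  strictMono_Lfun.le_iff_le.1 <| by rw [Lfun_u1hat, Lfun_u1hat]; linarith

theorem continuous_u1hat : Continuous u1hat :=
  antitone_u1hat.dual_right.continuous_of_surjective fun u => ⟨_, u1hat_Lfun u⟩

theorem u1hat_neg (η : ℝ) : u1hat (-η) = -u1hat η :=
  strictMono_Lfun.injective <| by rw [Lfun_neg, Lfun_u1hat, Lfun_u1hat]; ring

theorem u1hat_nonpos {η : ℝ} (hη : 0 ≤ η) : u1hat η ≤ 0 :=
  strictMono_Lfun.le_iff_le.1 <| by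
    rw [Lfun_u1hat, show Lfun 0 = 0 by simp [Lfun]]
    linarith

theorem kfun_sq (η : ℝ) : kfun η ^ 2 = 1 + u1hat η ^ 2 :=
  sq_sqrt (by positivity)

theorem kfun_pos (η : ℝ) : 0 < kfun η :=
  sqrt_pos.2 (by positivity)

theorem kfun_neg (η : ℝ) : kfun (-η) = kfun η := by
  simp only [kfun, u1hat_neg, neg_sq]

theorem hasDerivAt_u1hat (η : ℝ) : HasDerivAt u1hat (-1 / (2 * kfun η)) η := by
  have hL : HasDerivAt (fun u => -2 * Lfun u) (-2 * kfun η) (u1hat η) :=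
    (hasDerivAt_Lfun (u1hat η)).const_mul (-2)
  refine (hL.of_local_left_inverse continuous_u1hat.continuousAt
    (mul_ne_zero (by norm_num) (kfun_pos η).ne')
    (Eventually.of_forall fun y => by simp only [Lfun_u1hat]; ring)).congr_deriv ?_
  rw [neg_mul, inv_neg, neg_div, one_div]

theorem hasDerivAt_kfun (η : ℝ) : HasDerivAt kfun (-u1hat η / (2 * kfun η ^ 2)) η := by
  have hsq : HasDerivAt (fun y => 1 + u1hat y ^ 2) _ η := ((hasDerivAt_u1hat η).pow 2).const_add 1
  have hk : HasDerivAt kfun _ η := hsq.sqrt (by positivity)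
  refine hk.congr_deriv ?_
  change _ / (2 * kfun η) = _
  have := kfun_pos η
  field_simp
  norm_num

theorem differentiable_kfun : Differentiable ℝ kfun := fun η =>
  (hasDerivAt_kfun η).differentiableAt

theorem continuous_deriv_kfun : Continuous (deriv kfun) := by
  rw [funext fun η => (hasDerivAt_kfun η).deriv]
  exact continuous_u1hat.neg.div₀ (by have := differentiable_kfun.continuous; fun_prop)
    fun η => (mul_pos two_pos (pow_pos (kfun_pos η) 2)).ne'

theorem deriv_kfun_nonneg {η : ℝ} (hη : 0 ≤ η) : 0 ≤ deriv kfun η := by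
  rw [(hasDerivAt_kfun η).deriv]
  exact div_nonneg (neg_nonneg.2 (u1hat_nonpos hη)) (by positivity)

theorem monotoneOn_kfun : MonotoneOn kfun (Ici 0) :=
  monotoneOn_of_deriv_nonneg (convex_Ici 0) differentiable_kfun.continuous.continuousOn
    differentiable_kfun.differentiableOn fun _ hη => deriv_kfun_nonneg (interior_subset hη)

theorem kfun_le_kfun_of_abs_le {a b : ℝ} (hab : |a| ≤ b) : kfun a ≤ kfun b := by
  have habs : kfun |a| = kfun a := by
    rcases abs_choice a with h | h <;> rw [h]
    exact kfun_neg a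
  exact habs.symm.trans_le (monotoneOn_kfun (abs_nonneg a) ((abs_nonneg a).trans hab) hab)

theorem ffun_neg (η : ℝ) : ffun (-η) = -ffun η := by
  simp only [ffun, (hasDerivAt_kfun _).deriv, u1hat_neg, kfun_neg]
  ring

theorem ffun_nonneg {η : ℝ} (hη : 0 ≤ η) : 0 ≤ ffun η :=
  div_nonneg (deriv_kfun_nonneg hη) (sqrt_nonneg _)

theorem ffun_sq (η : ℝ) : ffun η ^ 2 = ((kfun η)⁻¹ ^ 3 - (kfun η)⁻¹ ^ 5) / 4 := by
  have hk := kfun_pos η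
  rw [ffun, (hasDerivAt_kfun η).deriv, div_pow, sq_sqrt hk.le, div_pow, neg_sq,
    eq_sub_of_add_eq' (kfun_sq η).symm]
  field_simp
  ring

theorem hasDerivAt_cube_sub_fifth (x : ℝ) :
    HasDerivAt (fun x : ℝ => x ^ 3 - x ^ 5) (x ^ 2 * (3 - 5 * x ^ 2)) x := by
  refine ((hasDerivAt_pow 3 x).sub (hasDerivAt_pow 5 x)).congr_deriv ?_
  push_cast
  ring

theorem monotoneOn_cube_sub_fifth :
    MonotoneOn (fun x : ℝ => x ^ 3 - x ^ 5) (Icc 0 √(3 / 5)) := by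
  refine monotoneOn_of_hasDerivWithinAt_nonneg (convex_Icc _ _) (by fun_prop)
    (fun x _ => (hasDerivAt_cube_sub_fifth x).hasDerivWithinAt) fun x hx => ?_
  obtain ⟨hx0, hx⟩ := interior_subset hx
  have := (le_sqrt hx0 (by norm_num)).1 hx
  exact mul_nonneg (sq_nonneg x) (by linarith)

theorem antitoneOn_cube_sub_fifth :
    AntitoneOn (fun x : ℝ => x ^ 3 - x ^ 5) (Ici √(3 / 5)) := by
  refine antitoneOn_of_hasDerivWithinAt_nonpos (convex_Ici _) (by fun_prop)
    (fun x _ => (hasDerivAt_cube_sub_fifth x).hasDerivWithinAt) fun x hx => ?_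
  have := (sqrt_le_iff.1 (interior_subset hx)).2
  exact mul_nonpos_of_nonneg_of_nonpos (sq_nonneg x) (by linarith)

theorem min_ffun_le {a η b : ℝ} (ha : 0 ≤ a) (haη : a ≤ η) (hηb : η ≤ b) :
    min (ffun a) (ffun b) ≤ ffun η := by
  have hη := ha.trans haη
  have hinv {x y : ℝ} (hx : 0 ≤ x) (hxy : x ≤ y) : (kfun y)⁻¹ ≤ (kfun x)⁻¹ :=
    inv_anti₀ (kfun_pos x) (monotoneOn_kfun hx (hx.trans hxy) hxy)
  have hpos (x : ℝ) : 0 ≤ (kfun x)⁻¹ := (inv_pos.2 (kfun_pos x)).le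
  rcases le_total (kfun η)⁻¹ √(3 / 5) with h | h
  · refine min_le_of_right_le (le_of_sq_le_sq ?_ (ffun_nonneg hη))
    have hcubic := monotoneOn_cube_sub_fifth ⟨hpos b, (hinv hη hηb).trans h⟩ ⟨hpos η, h⟩
      (hinv hη hηb)
    rw [ffun_sq, ffun_sq]
    linarith
  · refine min_le_of_left_le (le_of_sq_le_sq ?_ (ffun_nonneg hη))
    have hcubic := antitoneOn_cube_sub_fifth h (h.trans (hinv ha haη)) (hinv ha haη)
    rw [ffun_sq, ffun_sq]
    linarith

theorem hasDerivAt_Afun (lam t : ℝ) : HasDerivAt (Afun lam) (lam / 2 * Afun lam t) t := by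
  have hexp : HasDerivAt (Afun lam) _ t := (((hasDerivAt_id t).const_mul lam).div_const 2).exp
  convert hexp using 1
  rw [mul_one, mul_comm]
  rfl

theorem continuous_Afun (lam : ℝ) : Continuous (Afun lam) :=
  continuous_iff_continuousAt.2 fun t => (hasDerivAt_Afun lam t).continuousAt

theorem Afun_pos (lam t : ℝ) : 0 < Afun lam t :=
  exp_pos _

theorem Afun_zero (lam : ℝ) : Afun lam 0 = 1 := by
  simp [Afun]

theorem inv_Afun_le_one {lam t : ℝ} (hlam : 0 ≤ lam) (ht : 0 ≤ t) : (Afun lam t)⁻¹ ≤ 1 :=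
  inv_le_one_of_one_le₀ (one_le_exp (div_nonneg (mul_nonneg hlam ht) zero_le_two))

theorem hasDerivAt_inv_Afun (lam t : ℝ) :
    HasDerivAt (fun s => (Afun lam s)⁻¹) (-(lam / 2) * (Afun lam t)⁻¹) t := by
  refine ((hasDerivAt_Afun lam t).fun_inv (Afun_pos lam t).ne').congr_deriv ?_
  have := (Afun_pos lam t).ne'
  field_simp

end SoundSpeed

section Slab

variable {I : Set ℝ} {u : ℝ → ℝ → ℝ}

/-- The partial derivative `∂ₓu`, as a function on the plane. -/
def spaceDeriv (u : ℝ → ℝ → ℝ) (p : ℝ × ℝ) : ℝ := deriv (u p.1) p.2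

theorem hasDerivAt_slice {p : ℝ × ℝ} (hp : p.1 ∈ I)
    (hu : DifferentiableWithinAt ℝ (Function.uncurry u) (I ×ˢ univ) p) :
    HasDerivAt (u p.1) (fderivWithin ℝ (Function.uncurry u) (I ×ˢ univ) p (0, 1)) p.2 := by
  have hline : HasDerivWithinAt (fun y => (p.1, y)) ((0 : ℝ), (1 : ℝ)) univ p.2 :=
    ((hasDerivAt_const p.2 p.1).prodMk (hasDerivAt_id p.2)).hasDerivWithinAt
  have hmaps : MapsTo (fun y : ℝ => (p.1, y)) univ (I ×ˢ univ) := fun y _ => ⟨hp, mem_univ y⟩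
  exact hasDerivWithinAt_univ.1 (HasFDerivWithinAt.comp_hasDerivWithinAt p.2
    (l := Function.uncurry u) hu.hasFDerivWithinAt hline hmaps)

theorem continuousOn_spaceDeriv (hI : UniqueDiffOn ℝ I)
    (hu : ContDiffOn ℝ 1 (Function.uncurry u) (I ×ˢ univ)) :
    ContinuousOn (spaceDeriv u) (I ×ˢ univ) := by
  refine ((hu.continuousOn_fderivWithin (hI.prod uniqueDiffOn_univ) le_rfl).clm_apply
    (continuousOn_const (c := ((0 : ℝ), (1 : ℝ))))).congr fun p hp => ?_
  exact (hasDerivAt_slice hp.1 (hu.differentiableOn one_ne_zero p hp)).deriv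

theorem hasDerivWithinAt_along {v : ℝ × ℝ → ℝ} {X : ℝ → ℝ} {S : Set ℝ} {s d : ℝ}
    (hv : DifferentiableAt ℝ v (s, X s)) (hX : HasDerivWithinAt X d S s) :
    HasDerivWithinAt (fun y => v (y, X y)) (fderiv ℝ v (s, X s) (1, d)) S s :=
  hv.hasFDerivAt.comp_hasDerivWithinAt s ((hasDerivWithinAt_id s S).prodMk hX)

theorem hasDerivAt_along {v : ℝ × ℝ → ℝ} {X : ℝ → ℝ} {s d : ℝ}
    (hv : DifferentiableAt ℝ v (s, X s)) (hX : HasDerivAt X d s) :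
    HasDerivAt (fun y => v (y, X y)) (fderiv ℝ v (s, X s) (1, d)) s :=
  hasDerivWithinAt_univ.1 (hasDerivWithinAt_along hv hX.hasDerivWithinAt)

theorem spaceDeriv_eq_fderiv {p : ℝ × ℝ} (hu : DifferentiableAt ℝ (Function.uncurry u) p) :
    spaceDeriv u p = fderiv ℝ (Function.uncurry u) p (0, 1) := by
  have hslice := hasDerivAt_slice (mem_univ p.1) hu.differentiableWithinAt
  rw [univ_prod_univ, fderivWithin_univ] at hslice
  exact hslice.deriv

theorem fderiv_uncurry_apply_one_prod {p : ℝ × ℝ}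
    (hu : DifferentiableAt ℝ (Function.uncurry u) p) (c : ℝ) :
    fderiv ℝ (Function.uncurry u) p (1, c) = deriv (fun s => u s p.2) p.1 + c * spaceDeriv u p := by
  have htime : deriv (fun s => u s p.2) p.1 = fderiv ℝ (Function.uncurry u) p (1, 0) :=
    (hasDerivAt_along (X := fun _ => p.2) hu (hasDerivAt_const p.1 p.2)).deriv
  rw [spaceDeriv_eq_fderiv hu, htime, ← smul_eq_mul, ← map_smul, ← map_add]
  simp

theorem spaceDeriv_eventuallyEq {p : ℝ × ℝ} (hu : ContDiffAt ℝ 1 (Function.uncurry u) p) :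
    spaceDeriv u =ᶠ[𝓝 p] fun q => fderiv ℝ (Function.uncurry u) q (0, 1) := by
  filter_upwards [hu.eventually (by simp)] with q hq
  exact spaceDeriv_eq_fderiv (hq.differentiableAt one_ne_zero)

theorem differentiableAt_spaceDeriv {p : ℝ × ℝ} (hu : ContDiffAt ℝ 2 (Function.uncurry u) p) :
    DifferentiableAt ℝ (spaceDeriv u) p := by
  have hDu : DifferentiableAt ℝ (fderiv ℝ (Function.uncurry u)) p :=
    (hu.fderiv_right (m := 1) le_rfl).differentiableAt one_ne_zero
  exact (hDu.clm_apply (differentiableAt_const _)).congr_of_eventuallyEq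
    (spaceDeriv_eventuallyEq (hu.of_le one_le_two))

theorem fderiv_spaceDeriv_of_transport {c g : ℝ → ℝ → ℝ} {p : ℝ × ℝ}
    (hu : ContDiffAt ℝ 2 (Function.uncurry u) p) (hc : DifferentiableAt ℝ (Function.uncurry c) p)
    (hg : DifferentiableAt ℝ (Function.uncurry g) p)
    (htransport : ∀ᶠ q in 𝓝 p,
      fderiv ℝ (Function.uncurry u) q (1, Function.uncurry c q) = Function.uncurry g q) :
    fderiv ℝ (spaceDeriv u) p (1, Function.uncurry c p)
      = spaceDeriv g p - spaceDeriv c p * spaceDeriv u p := by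
  have hV := (hasFDerivAt_const (1 : ℝ) p).prodMk hc.hasFDerivAt
  have hVx : ((0 : ℝ), fderiv ℝ (Function.uncurry c) p (0, 1)) =
      fderiv ℝ (Function.uncurry c) p (0, 1) • ((0 : ℝ), (1 : ℝ)) := by simp
  rw [(spaceDeriv_eventuallyEq (hu.of_le one_le_two)).fderiv_eq,
    fderiv_fderiv_apply_of_transport hu hV.differentiableAt htransport, hV.fderiv,
    spaceDeriv_eq_fderiv hc, spaceDeriv_eq_fderiv hg,
    spaceDeriv_eq_fderiv (hu.differentiableAt two_ne_zero), ← smul_eq_mul, ← map_smul, ← hVx]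
  rfl

end Slab

section Determinacy

/-- The region between the forward characteristic `X` and the line of speed `-δ` ending at `B`,
up to time `t`. For wave speeds bounded by `δ` no backward characteristic leaves it before
time `0`, so the data on `[X 0, B]` determine the solution there. -/
def determinacyRegion (X : ℝ → ℝ) (δ B t : ℝ) : Set (ℝ × ℝ) :=
  {p | p.1 ∈ Icc 0 t ∧ p.2 ∈ Icc (X p.1) (B - δ * p.1)}

variable {X : ℝ → ℝ} {δ B t : ℝ}

theorem isCompact_determinacyRegion (hX : ContinuousOn X (Icc 0 t)) :
    IsCompact (determinacyRegion X δ B t) :=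
  isCompact_setOf_mem_Icc isCompact_Icc hX (g := fun s => B - δ * s) (by fun_prop)

theorem eventually_mem_Icc_zero {s : ℝ} (hs : s ∈ Ioc 0 t) :
    ∀ᶠ y in 𝓝[<] s, y ∈ Icc 0 s ∧ y ∈ Icc 0 t := by
  filter_upwards [Ioo_mem_nhdsLT hs.1] with y hy
  exact ⟨⟨hy.1.le, hy.2.le⟩, hy.1.le, hy.2.le.trans hs.2⟩

variable {p : ℝ × ℝ} {c : ℝ}

theorem exists_backward_curve_of_left_moving (hX : MonotoneOn X (Icc 0 t)) (hc : c ∈ Icc 0 δ)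
    (hp : p ∈ determinacyRegion X δ B t) (hp0 : 0 < p.1) :
    ∃ γ : ℝ → ℝ, γ p.1 = p.2 ∧ (∀ᶠ s in 𝓝[<] p.1, (s, γ s) ∈ determinacyRegion X δ B t) ∧
      HasDerivAt γ (-c) p.1 := by
  refine ⟨fun s => p.2 + -c * (s - p.1), by simp, ?_, ?_⟩
  · filter_upwards [eventually_mem_Icc_zero ⟨hp0, hp.1.2⟩] with s ⟨hs, hst⟩
    have := hX hst hp.1 hs.2
    refine ⟨hst, ?_, ?_⟩ <;> dsimp only <;> nlinarith [hc.1, hc.2, hp.2.1, hp.2.2, hs.2]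
  · simpa using (((hasDerivAt_id p.1).sub_const p.1).const_mul (-c)).const_add p.2

/- A point on the left edge `x = X t` is followed back along `X` itself. -/
theorem exists_backward_curve_of_right_moving {κ : ℝ → ℝ → ℝ}
    (hX : IsIntegralCurveOn X κ (Icc 0 t)) (hmono : MonotoneOn X (Icc 0 t))
    (hκ : κ p.1 p.2 ∈ Icc 0 δ) (hp : p ∈ determinacyRegion X δ B t) (hp0 : 0 < p.1) :
    ∃ γ : ℝ → ℝ, γ p.1 = p.2 ∧ (∀ᶠ s in 𝓝[<] p.1, (s, γ s) ∈ determinacyRegion X δ B t) ∧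
      HasDerivWithinAt γ (κ p.1 p.2) (Iio p.1) p.1 := by
  have hδ : 0 ≤ δ := hκ.1.trans hκ.2
  have hevent := eventually_mem_Icc_zero ⟨hp0, hp.1.2⟩
  have hXp : HasDerivWithinAt X (κ p.1 (X p.1)) (Iio p.1) p.1 :=
    (hX p.1 hp.1).mono_of_mem_nhdsWithin (hevent.mono fun _ h => h.2)
  rcases hp.2.1.eq_or_lt with hedge | hinside
  · refine ⟨X, hedge, ?_, hedge ▸ hXp⟩
    filter_upwards [hevent] with s ⟨hs, hst⟩
    have := hmono hst hp.1 hs.2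
    exact ⟨hst, le_rfl, by dsimp only; nlinarith [hp.2.2, hs.2]⟩
  · have hline : HasDerivAt (fun s => p.2 + κ p.1 p.2 * (s - p.1)) (κ p.1 p.2) p.1 := by
      simpa using (((hasDerivAt_id p.1).sub_const p.1).const_mul (κ p.1 p.2)).const_add p.2
    refine ⟨_, by simp, ?_, hline.hasDerivWithinAt⟩
    have hlt : ∀ᶠ s in 𝓝[<] p.1, X s < p.2 + κ p.1 p.2 * (s - p.1) :=
      hXp.continuousWithinAt.eventually_lt hline.continuousAt.continuousWithinAt (by simpa)
    filter_upwards [hevent, hlt] with s ⟨hs, hst⟩ hXs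
    refine ⟨hst, hXs.le, ?_⟩
    dsimp only
    nlinarith [hκ.1, hp.2.2, hs.2]

theorem nonpos_on_determinacyRegion {κ : ℝ → ℝ → ℝ} {a b : ℝ × ℝ → ℝ} {K : ℝ}
    (hX : IsIntegralCurveOn X κ (Icc 0 t)) (hmono : MonotoneOn X (Icc 0 t))
    (hκ : ∀ p ∈ determinacyRegion X δ B t, κ p.1 p.2 ∈ Icc 0 δ)
    (ha : ContinuousOn a (determinacyRegion X δ B t))
    (hb : ContinuousOn b (determinacyRegion X δ B t))
    (had : ∀ p ∈ determinacyRegion X δ B t, 0 < p.1 → DifferentiableAt ℝ a p)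
    (hbd : ∀ p ∈ determinacyRegion X δ B t, 0 < p.1 → DifferentiableAt ℝ b p)
    (hinit : ∀ x ∈ Icc (X 0) B, a (0, x) ≤ 0 ∧ b (0, x) ≤ 0)
    (ha' : ∀ p ∈ determinacyRegion X δ B t, 0 < p.1 → 0 < a p → b p ≤ a p →
      fderiv ℝ a p (1, κ p.1 p.2) ≤ K * a p)
    (hb' : ∀ p ∈ determinacyRegion X δ B t, 0 < p.1 → 0 < b p → a p ≤ b p →
      fderiv ℝ b p (1, -κ p.1 p.2) ≤ K * b p)
    {p : ℝ × ℝ} (hp : p ∈ determinacyRegion X δ B t) : a p ≤ 0 ∧ b p ≤ 0 := by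
  have hinit' {q : ℝ × ℝ} (hq : q ∈ determinacyRegion X δ B t) (hpos : 0 < a q ∨ 0 < b q) :
      0 < q.1 := by
    refine hq.1.1.lt_of_ne' fun h0 => ?_
    have hedge : q = (0, q.2) := Prod.ext h0 rfl
    have := hinit q.2 (by simpa [h0] using hq.2)
    rw [← hedge] at this
    exact hpos.elim this.1.not_gt this.2.not_gt
  let w : Bool → ℝ × ℝ → ℝ := fun i => bif i then a else b
  suffices ∀ i, w i p ≤ 0 from ⟨this true, this false⟩
  refine fun i => nonpos_of_backward_curve (u := w) (K := K)
    (isCompact_determinacyRegion hX.continuousOn) (Bool.forall_bool.2 ⟨hb, ha⟩)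
    (Bool.forall_bool.2 ⟨fun q hq hpos hle => ?_, fun q hq hpos hle => ?_⟩) i hp
  · have hq0 := hinit' hq (Or.inr hpos)
    obtain ⟨γ, hγ, hγD, hγ'⟩ := exists_backward_curve_of_left_moving hmono (hκ q hq) hq hq0
    exact ⟨γ, _, hγ, hγD, hasDerivWithinAt_along (by rw [hγ]; exact hbd q hq hq0)
      hγ'.hasDerivWithinAt, by rw [hγ]; exact hb' q hq hq0 hpos (hle true)⟩
  · have hq0 := hinit' hq (Or.inl hpos)
    obtain ⟨γ, hγ, hγD, hγ'⟩ := exists_backward_curve_of_right_moving hX hmono (hκ q hq) hq hq0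
    exact ⟨γ, _, hγ, hγD, hasDerivWithinAt_along (by rw [hγ]; exact had q hq hq0) hγ',
      by rw [hγ]; exact ha' q hq hq0 hpos (hle false)⟩

end Determinacy

section DiagonalSystem

variable {lam T : ℝ} {r l : ℝ → ℝ → ℝ}

/-- A `C²` solution `(r, ℓ)` of the diagonal system on `[0, T) × ℝ`. The equations are imposed for
`t > 0` only, where the time derivative is two-sided. -/
structure IsDiagonalSolution (lam T : ℝ) (r l : ℝ → ℝ → ℝ) : Prop where
  contDiffOn_r : ContDiffOn ℝ 2 (Function.uncurry r) (Ico 0 T ×ˢ univ)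
  contDiffOn_l : ContDiffOn ℝ 2 (Function.uncurry l) (Ico 0 T ×ˢ univ)
  transport_r : ∀ t ∈ Ioo 0 T, ∀ x, deriv (fun s => r s x) t
    + kfun (etafun r l t x) * deriv (r t) x = -(lam / 2) * (r t x + l t x)
  transport_l : ∀ t ∈ Ioo 0 T, ∀ x, deriv (fun s => l s x) t
    - kfun (etafun r l t x) * deriv (l t) x = -(lam / 2) * (r t x + l t x)

/-- The wave speed `k(η(t,x))`: forward characteristics are the integral curves of `charSpeed r ℓ`,
backward ones those of `-charSpeed r ℓ`. -/
def charSpeed (r l : ℝ → ℝ → ℝ) (t x : ℝ) : ℝ := kfun (etafun r l t x)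

theorem eventually_fst_mem_Ioo {p : ℝ × ℝ} {a b : ℝ} (hp : p.1 ∈ Ioo a b) :
    ∀ᶠ q : ℝ × ℝ in 𝓝 p, q.1 ∈ Ioo a b :=
  continuousAt_fst.eventually (isOpen_Ioo.mem_nhds hp)

theorem charSpeed_pos (r l : ℝ → ℝ → ℝ) (t x : ℝ) : 0 < charSpeed r l t x :=
  kfun_pos _

theorem ffun_etafun (r l : ℝ → ℝ → ℝ) (t x : ℝ) :
    ffun (etafun r l t x) = deriv kfun (etafun r l t x) / √(charSpeed r l t x) :=
  rfl

theorem pfun_eq (lam : ℝ) (r l : ℝ → ℝ → ℝ) (t x : ℝ) :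
    pfun lam r l t x = Afun lam t * √(charSpeed r l t x) * spaceDeriv r (t, x) :=
  rfl

theorem qfun_eq (lam : ℝ) (r l : ℝ → ℝ → ℝ) (t x : ℝ) :
    qfun lam r l t x = Afun lam t * √(charSpeed r l t x) * spaceDeriv l (t, x) :=
  rfl

theorem etafun_neg (r l : ℝ → ℝ → ℝ) (t x : ℝ) : etafun (-r) (-l) t x = -etafun r l t x := by
  simp only [etafun, Pi.neg_apply]
  ring

theorem etafun_eq_two_mul {t x : ℝ} (h : l t x = -r t x) : etafun r l t x = 2 * r t x := by
  rw [etafun, h]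
  ring

theorem charSpeed_neg (r l : ℝ → ℝ → ℝ) : charSpeed (-r) (-l) = charSpeed r l := by
  ext t x
  rw [charSpeed, etafun_neg, kfun_neg, charSpeed]

section ForwardCharacteristic

variable {X : ℝ → ℝ} {s t δ B : ℝ}

theorem continuousOn_along {v : ℝ × ℝ → ℝ} (hv : ContinuousOn v (Ico 0 T ×ˢ univ))
    (hX : IsIntegralCurveOn X (charSpeed r l) (Ico 0 T)) :
    ContinuousOn (fun s => v (s, X s)) (Ico 0 T) :=
  hv.comp (continuousOn_id.prodMk hX.continuousOn) fun s hs => ⟨hs, mem_univ (X s)⟩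

theorem hasDerivAt_of_isIntegralCurveOn {v : ℝ → ℝ → ℝ} (hX : IsIntegralCurveOn X v (Ico 0 T))
    (hs : s ∈ Ioo 0 T) : HasDerivAt X (v s (X s)) s :=
  (hX s (Ioo_subset_Ico_self hs)).hasDerivAt (Ico_mem_nhds hs.1 hs.2)

theorem monotoneOn_of_isIntegralCurveOn_charSpeed
    (hX : IsIntegralCurveOn X (charSpeed r l) (Ico 0 T)) : MonotoneOn X (Ico 0 T) :=
  monotoneOn_of_hasDerivWithinAt_nonneg (convex_Ico 0 T) hX.continuousOn
    (fun s hs => (hX s (interior_subset hs)).mono interior_subset)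
    fun s _ => (charSpeed_pos r l s (X s)).le

theorem le_add_mul_of_isIntegralCurveOn_charSpeed
    (hX : IsIntegralCurveOn X (charSpeed r l) (Ico 0 T))
    (hspeed : ∀ t ∈ Ico 0 T, ∀ x, charSpeed r l t x ≤ δ) (hs : s ∈ Ico 0 T) :
    X s ≤ X 0 + δ * s := by
  have hmono : MonotoneOn (fun s => δ * s - X s) (Ico 0 T) :=
    monotoneOn_of_hasDerivWithinAt_nonneg (convex_Ico 0 T)
      ((continuousOn_const.mul continuousOn_id).sub hX.continuousOn)
      (fun s hs => ((hasDerivWithinAt_id s _).const_mul δ).sub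
        ((hX s (interior_subset hs)).mono interior_subset))
      fun s hs => by simpa using hspeed s (interior_subset hs) (X s)
  have := hmono ⟨le_rfl, hs.1.trans_lt hs.2⟩ hs hs.1
  simp only [mul_zero] at this
  linarith

theorem along_mem_determinacyRegion
    (hX : IsIntegralCurveOn X (charSpeed r l) (Ico 0 T))
    (hspeed : ∀ t ∈ Ico 0 T, ∀ x, charSpeed r l t x ≤ δ) (ht : t < T) (hs : s ∈ Icc 0 t) :
    (s, X s) ∈ determinacyRegion X δ (X 0 + 2 * δ * t) t := by
  have hsT : s ∈ Ico 0 T := ⟨hs.1, hs.2.trans_lt ht⟩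
  have hδ : 0 ≤ δ := (charSpeed_pos r l s 0).le.trans (hspeed s hsT 0)
  have hXs := le_add_mul_of_isIntegralCurveOn_charSpeed hX hspeed hsT
  have := mul_le_mul_of_nonneg_left hs.2 hδ
  exact ⟨hs, le_rfl, by dsimp only; linarith⟩

theorem determinacyRegion_subset_slab (ht : t < T) :
    determinacyRegion X δ B t ⊆ Ico 0 T ×ˢ univ := fun p hp =>
  ⟨⟨hp.1.1, hp.1.2.trans_lt ht⟩, mem_univ p.2⟩

end ForwardCharacteristic

namespace IsDiagonalSolution

theorem neg (h : IsDiagonalSolution lam T r l) : IsDiagonalSolution lam T (-r) (-l) where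
  contDiffOn_r := h.contDiffOn_r.neg
  contDiffOn_l := h.contDiffOn_l.neg
  transport_r t ht x := by
    have := h.transport_r t ht x
    simp only [etafun_neg, kfun_neg, Pi.neg_apply, deriv.fun_neg, deriv.neg]
    linarith
  transport_l t ht x := by
    have := h.transport_l t ht x
    simp only [etafun_neg, kfun_neg, Pi.neg_apply, deriv.fun_neg, deriv.neg]
    linarith

section Pointwise

variable {p : ℝ × ℝ}

theorem contDiffAt_r (h : IsDiagonalSolution lam T r l) (hp : p.1 ∈ Ioo 0 T) :
    ContDiffAt ℝ 2 (Function.uncurry r) p :=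
  h.contDiffOn_r.contDiffAt (prod_mem_nhds (Ico_mem_nhds hp.1 hp.2) univ_mem)

theorem contDiffAt_l (h : IsDiagonalSolution lam T r l) (hp : p.1 ∈ Ioo 0 T) :
    ContDiffAt ℝ 2 (Function.uncurry l) p :=
  h.contDiffOn_l.contDiffAt (prod_mem_nhds (Ico_mem_nhds hp.1 hp.2) univ_mem)

theorem differentiableAt_r (h : IsDiagonalSolution lam T r l) (hp : p.1 ∈ Ioo 0 T) :
    DifferentiableAt ℝ (Function.uncurry r) p :=
  (h.contDiffAt_r hp).differentiableAt two_ne_zero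

theorem differentiableAt_l (h : IsDiagonalSolution lam T r l) (hp : p.1 ∈ Ioo 0 T) :
    DifferentiableAt ℝ (Function.uncurry l) p :=
  (h.contDiffAt_l hp).differentiableAt two_ne_zero

theorem differentiable_r (h : IsDiagonalSolution lam T r l) {t : ℝ} (ht : t ∈ Ico 0 T) :
    Differentiable ℝ (r t) := fun x =>
  (hasDerivAt_slice ht (h.contDiffOn_r.differentiableOn two_ne_zero (t, x)
    ⟨ht, mem_univ x⟩)).differentiableAt

theorem differentiable_l (h : IsDiagonalSolution lam T r l) {t : ℝ} (ht : t ∈ Ico 0 T) :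
    Differentiable ℝ (l t) := fun x =>
  (hasDerivAt_slice ht (h.contDiffOn_l.differentiableOn two_ne_zero (t, x)
    ⟨ht, mem_univ x⟩)).differentiableAt

theorem differentiableAt_charSpeed (h : IsDiagonalSolution lam T r l) (hp : p.1 ∈ Ioo 0 T) :
    DifferentiableAt ℝ (Function.uncurry (charSpeed r l)) p :=
  (differentiable_kfun _).comp p ((h.differentiableAt_r hp).sub (h.differentiableAt_l hp))

theorem spaceDeriv_charSpeed (h : IsDiagonalSolution lam T r l) (hp : p.1 ∈ Ico 0 T) :
    spaceDeriv (charSpeed r l) p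
      = deriv kfun (etafun r l p.1 p.2) * (spaceDeriv r p - spaceDeriv l p) :=
  HasDerivAt.deriv <| (differentiable_kfun _).hasDerivAt.comp p.2
    ((h.differentiable_r hp p.2).hasDerivAt.sub (h.differentiable_l hp p.2).hasDerivAt)

theorem fderiv_r (h : IsDiagonalSolution lam T r l) (hp : p.1 ∈ Ioo 0 T) :
    fderiv ℝ (Function.uncurry r) p (1, charSpeed r l p.1 p.2)
      = -(lam / 2) * (r p.1 p.2 + l p.1 p.2) := by
  rw [fderiv_uncurry_apply_one_prod (h.differentiableAt_r hp)]
  exact h.transport_r p.1 hp p.2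

theorem fderiv_l (h : IsDiagonalSolution lam T r l) (hp : p.1 ∈ Ioo 0 T) :
    fderiv ℝ (Function.uncurry l) p (1, -charSpeed r l p.1 p.2)
      = -(lam / 2) * (r p.1 p.2 + l p.1 p.2) := by
  rw [fderiv_uncurry_apply_one_prod (h.differentiableAt_l hp), neg_mul, ← sub_eq_add_neg]
  exact h.transport_l p.1 hp p.2

theorem spaceDeriv_damping (h : IsDiagonalSolution lam T r l) (hp : p.1 ∈ Ico 0 T) :
    spaceDeriv (fun t x => -(lam / 2) * (r t x + l t x)) p
      = -(lam / 2) * (spaceDeriv r p + spaceDeriv l p) :=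
  HasDerivAt.deriv <| ((h.differentiable_r hp p.2).hasDerivAt.add
    (h.differentiable_l hp p.2).hasDerivAt).const_mul (-(lam / 2))

theorem differentiableAt_damping (h : IsDiagonalSolution lam T r l) (hp : p.1 ∈ Ioo 0 T) :
    DifferentiableAt ℝ (Function.uncurry fun t x => -(lam / 2) * (r t x + l t x)) p :=
  ((h.differentiableAt_r hp).add (h.differentiableAt_l hp)).const_mul (-(lam / 2))

theorem fderiv_spaceDeriv_r (h : IsDiagonalSolution lam T r l) (hp : p.1 ∈ Ioo 0 T) :
    fderiv ℝ (spaceDeriv r) p (1, charSpeed r l p.1 p.2)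
      = -(lam / 2) * (spaceDeriv r p + spaceDeriv l p)
        - deriv kfun (etafun r l p.1 p.2) * (spaceDeriv r p - spaceDeriv l p) * spaceDeriv r p := by
  rw [← h.spaceDeriv_damping (Ioo_subset_Ico_self hp),
    ← h.spaceDeriv_charSpeed (Ioo_subset_Ico_self hp)]
  exact fderiv_spaceDeriv_of_transport (h.contDiffAt_r hp) (h.differentiableAt_charSpeed hp)
    (h.differentiableAt_damping hp) ((eventually_fst_mem_Ioo hp).mono fun q hq => h.fderiv_r hq)

theorem fderiv_spaceDeriv_l (h : IsDiagonalSolution lam T r l) (hp : p.1 ∈ Ioo 0 T) :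
    fderiv ℝ (spaceDeriv l) p (1, -charSpeed r l p.1 p.2)
      = -(lam / 2) * (spaceDeriv r p + spaceDeriv l p)
        + deriv kfun (etafun r l p.1 p.2) * (spaceDeriv r p - spaceDeriv l p) * spaceDeriv l p := by
  have hneg : spaceDeriv (-charSpeed r l) p = -spaceDeriv (charSpeed r l) p := deriv.neg
  rw [← h.spaceDeriv_damping (Ioo_subset_Ico_self hp),
    ← h.spaceDeriv_charSpeed (Ioo_subset_Ico_self hp), ← sub_neg_eq_add, ← neg_mul, ← hneg]
  exact fderiv_spaceDeriv_of_transport (c := -charSpeed r l) (h.contDiffAt_l hp)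
    (h.differentiableAt_charSpeed hp).neg
    (h.differentiableAt_damping hp) ((eventually_fst_mem_Ioo hp).mono fun q hq => h.fderiv_l hq)

theorem continuousOn_spaceDeriv_r (h : IsDiagonalSolution lam T r l) :
    ContinuousOn (spaceDeriv r) (Ico 0 T ×ˢ univ) :=
  continuousOn_spaceDeriv (uniqueDiffOn_Ico 0 T) (h.contDiffOn_r.of_le one_le_two)

theorem continuousOn_spaceDeriv_l (h : IsDiagonalSolution lam T r l) :
    ContinuousOn (spaceDeriv l) (Ico 0 T ×ˢ univ) :=
  continuousOn_spaceDeriv (uniqueDiffOn_Ico 0 T) (h.contDiffOn_l.of_le one_le_two)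

theorem continuousOn_etafun (h : IsDiagonalSolution lam T r l) :
    ContinuousOn (Function.uncurry (etafun r l)) (Ico 0 T ×ˢ univ) :=
  h.contDiffOn_r.continuousOn.sub h.contDiffOn_l.continuousOn

theorem continuousOn_spaceDeriv_charSpeed (h : IsDiagonalSolution lam T r l) :
    ContinuousOn (spaceDeriv (charSpeed r l)) (Ico 0 T ×ˢ univ) :=
  ((continuous_deriv_kfun.comp_continuousOn h.continuousOn_etafun).mul
    (h.continuousOn_spaceDeriv_r.sub h.continuousOn_spaceDeriv_l)).congr fun _ hq =>
    h.spaceDeriv_charSpeed hq.1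

end Pointwise

section Comparison

variable {X : ℝ → ℝ} {t δ B : ℝ}

theorem le_r_and_l_le_neg {ρ : ℝ} (h : IsDiagonalSolution lam T r l) (hlam : 0 ≤ lam)
    (hX : IsIntegralCurveOn X (charSpeed r l) (Ico 0 T))
    (hspeed : ∀ t ∈ Ico 0 T, ∀ x, charSpeed r l t x ≤ δ) (ht : t < T)
    (hinit : ∀ x ∈ Icc (X 0) B, ρ ≤ r 0 x ∧ l 0 x ≤ -ρ) {p : ℝ × ℝ}
    (hp : p ∈ determinacyRegion X δ B t) : ρ ≤ r p.1 p.2 ∧ l p.1 p.2 ≤ -ρ := by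
  have hsub : Icc 0 t ⊆ Ico 0 T := Icc_subset_Ico_right ht
  have hD : determinacyRegion X δ B t ⊆ Ico 0 T ×ˢ univ := determinacyRegion_subset_slab ht
  have hint {q : ℝ × ℝ} (hq : q ∈ determinacyRegion X δ B t) (hq0 : 0 < q.1) : q.1 ∈ Ioo 0 T :=
    ⟨hq0, (hD hq).1.2⟩
  suffices ρ - r p.1 p.2 ≤ 0 ∧ ρ + l p.1 p.2 ≤ 0 by constructor <;> linarith
  refine nonpos_on_determinacyRegion (a := fun q => ρ - r q.1 q.2) (b := fun q => ρ + l q.1 q.2)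
    (K := 0) (hX.mono hsub) ((monotoneOn_of_isIntegralCurveOn_charSpeed hX).mono hsub)
    (fun q hq => ⟨(charSpeed_pos r l _ _).le, hspeed _ (hD hq).1 _⟩)
    (continuousOn_const.sub (h.contDiffOn_r.continuousOn.mono hD))
    (continuousOn_const.add (h.contDiffOn_l.continuousOn.mono hD))
    (fun q hq hq0 => (h.differentiableAt_r (hint hq hq0)).const_sub ρ)
    (fun q hq hq0 => (h.differentiableAt_l (hint hq hq0)).const_add ρ)
    (fun x hx => by constructor <;> linarith [(hinit x hx).1, (hinit x hx).2]) ?_ ?_ hp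
  · intro q hq hq0 _ hle
    have hdamp := mul_nonneg hlam (sub_nonneg.2 hle)
    change fderiv ℝ (fun z => ρ - Function.uncurry r z) q _ ≤ _
    rw [fderiv_const_sub, neg_apply, h.fderiv_r (hint hq hq0)]
    linarith
  · intro q hq hq0 _ hle
    have hdamp := mul_nonneg hlam (sub_nonneg.2 hle)
    change fderiv ℝ (fun z => ρ + Function.uncurry l z) q _ ≤ _
    rw [fderiv_const_add, h.fderiv_l (hint hq hq0)]
    linarith

theorem spaceDeriv_r_nonpos_and_l_nonneg (h : IsDiagonalSolution lam T r l)
    (hlam : 0 ≤ lam) (hX : IsIntegralCurveOn X (charSpeed r l) (Ico 0 T))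
    (hspeed : ∀ t ∈ Ico 0 T, ∀ x, charSpeed r l t x ≤ δ) (ht : t < T)
    (hinit : ∀ x ∈ Icc (X 0) B, deriv (r 0) x ≤ 0 ∧ 0 ≤ deriv (l 0) x) {p : ℝ × ℝ}
    (hp : p ∈ determinacyRegion X δ B t) : spaceDeriv r p ≤ 0 ∧ 0 ≤ spaceDeriv l p := by
  have hsub : Icc 0 t ⊆ Ico 0 T := Icc_subset_Ico_right ht
  have hD : determinacyRegion X δ B t ⊆ Ico 0 T ×ˢ univ := determinacyRegion_subset_slab ht
  have hint {q : ℝ × ℝ} (hq : q ∈ determinacyRegion X δ B t) (hq0 : 0 < q.1) : q.1 ∈ Ioo 0 T :=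
    ⟨hq0, (hD hq).1.2⟩
  have hrx := (h.continuousOn_spaceDeriv_r).mono hD
  have hlx := (h.continuousOn_spaceDeriv_l).mono hD
  obtain ⟨C, hC⟩ := (isCompact_determinacyRegion (hX.mono hsub).continuousOn)
    |>.exists_bound_of_continuousOn (h.continuousOn_spaceDeriv_charSpeed.mono hD)
  rw [← neg_nonpos (a := spaceDeriv l p)]
  refine nonpos_on_determinacyRegion (a := spaceDeriv r) (b := -spaceDeriv l) (K := C)
    (hX.mono hsub) ((monotoneOn_of_isIntegralCurveOn_charSpeed hX).mono hsub)
    (fun q hq => ⟨(charSpeed_pos r l _ _).le, hspeed _ (hD hq).1 _⟩) hrx hlx.neg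
    (fun q hq hq0 => differentiableAt_spaceDeriv (h.contDiffAt_r (hint hq hq0)))
    (fun q hq hq0 => (differentiableAt_spaceDeriv (h.contDiffAt_l (hint hq hq0))).neg)
    (fun x hx => ⟨(hinit x hx).1, neg_nonpos.2 (hinit x hx).2⟩) ?_ ?_ hp
  · intro q hq hq0 hpos hle
    rw [h.fderiv_spaceDeriv_r (hint hq hq0), ← h.spaceDeriv_charSpeed (hD hq).1]
    have hbound := mul_le_mul_of_nonneg_right (neg_le_of_abs_le (hC q hq)) hpos.le
    have hdamp := mul_nonneg hlam (neg_le_iff_add_nonneg.1 hle)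
    linarith
  · intro q hq hq0 hpos hle
    rw [fderiv_neg, neg_apply, h.fderiv_spaceDeriv_l (hint hq hq0),
      ← h.spaceDeriv_charSpeed (hD hq).1]
    have hbound := mul_le_mul_of_nonneg_right (le_of_abs_le (hC q hq)) hpos.le
    have hdamp := mul_nonneg hlam (sub_nonneg.2 hle)
    simp only [Pi.neg_apply] at hbound hdamp ⊢
    linarith

end Comparison

section AlongCharacteristic

variable {X : ℝ → ℝ} {s t : ℝ}

theorem hasDerivAt_r_along (h : IsDiagonalSolution lam T r l)
    (hX : IsIntegralCurveOn X (charSpeed r l) (Ico 0 T)) (hs : s ∈ Ioo 0 T) :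
    HasDerivAt (fun s => r s (X s)) (-(lam / 2) * (r s (X s) + l s (X s))) s := by
  rw [← h.fderiv_r (p := (s, X s)) hs]
  exact hasDerivAt_along (h.differentiableAt_r hs) (hasDerivAt_of_isIntegralCurveOn hX hs)

theorem hasDerivAt_etafun_along (h : IsDiagonalSolution lam T r l)
    (hX : IsIntegralCurveOn X (charSpeed r l) (Ico 0 T)) (hs : s ∈ Ioo 0 T) :
    HasDerivAt (fun s => etafun r l s (X s))
      (-2 * charSpeed r l s (X s) * spaceDeriv l (s, X s)) s := by
  have hl := hasDerivAt_along (h.differentiableAt_l (p := (s, X s)) hs)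
    (hasDerivAt_of_isIntegralCurveOn hX hs)
  refine ((h.hasDerivAt_r_along hX hs).sub hl).congr_deriv ?_
  have hback := h.fderiv_l (p := (s, X s)) hs
  rw [fderiv_uncurry_apply_one_prod (h.differentiableAt_l hs)] at hback ⊢
  linarith

theorem hasDerivAt_pfun_along (h : IsDiagonalSolution lam T r l)
    (hX : IsIntegralCurveOn X (charSpeed r l) (Ico 0 T)) (hs : s ∈ Ioo 0 T) :
    HasDerivAt (fun s => pfun lam r l s (X s))
      (-(ffun (etafun r l s (X s)) * (Afun lam s)⁻¹ * pfun lam r l s (X s) ^ 2)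
        - lam / 2 * qfun lam r l s (X s)) s := by
  have hk : HasDerivAt (fun s => charSpeed r l s (X s)) _ s :=
    (differentiable_kfun _).hasDerivAt.comp s (h.hasDerivAt_etafun_along hX hs)
  have hrx := hasDerivAt_along (differentiableAt_spaceDeriv (h.contDiffAt_r (p := (s, X s)) hs))
    (hasDerivAt_of_isIntegralCurveOn hX hs)
  have hprod := ((hasDerivAt_Afun lam s).fun_mul
    (hk.sqrt (charSpeed_pos r l s (X s)).ne')).fun_mul hrx
  refine hprod.congr_deriv ?_
  have hκ := charSpeed_pos r l s (X s)
  have := Afun_pos lam s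
  rw [h.fderiv_spaceDeriv_r hs, ffun_etafun, pfun_eq, qfun_eq]
  have := sqrt_pos.2 hκ
  field_simp
  rw [sq_sqrt hκ.le]
  ring

theorem antitoneOn_etafun_along (h : IsDiagonalSolution lam T r l)
    (hX : IsIntegralCurveOn X (charSpeed r l) (Ico 0 T)) (ht : t < T)
    (hlx : ∀ s ∈ Icc 0 t, 0 ≤ spaceDeriv l (s, X s)) :
    AntitoneOn (fun s => etafun r l s (X s)) (Icc 0 t) := by
  refine antitoneOn_of_hasDerivWithinAt_nonpos (convex_Icc 0 t)
    ((continuousOn_along h.continuousOn_etafun hX).mono (Icc_subset_Ico_right ht))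
    (f' := fun s => -2 * charSpeed r l s (X s) * spaceDeriv l (s, X s)) ?_ ?_ <;>
    rw [interior_Icc]
  · exact fun s hs =>
      (h.hasDerivAt_etafun_along hX (Ioo_subset_Ioo_right ht.le hs)).hasDerivWithinAt
  · intro s hs
    have := mul_nonneg (charSpeed_pos r l s (X s)).le (hlx s (Ioo_subset_Icc_self hs))
    linarith

/- `A (r - ρ)` is nondecreasing, since its derivative is `-(λ/2) A (ℓ + ρ)`. -/
theorem add_inv_Afun_mul_le_r_along {ρ : ℝ} (h : IsDiagonalSolution lam T r l) (hlam : 0 ≤ lam)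
    (hX : IsIntegralCurveOn X (charSpeed r l) (Ico 0 T)) (ht : t ∈ Ico 0 T)
    (hl : ∀ s ∈ Icc 0 t, l s (X s) ≤ -ρ) :
    ρ + (Afun lam t)⁻¹ * (r 0 (X 0) - ρ) ≤ r t (X t) := by
  have hr := (continuousOn_along h.contDiffOn_r.continuousOn hX).mono (Icc_subset_Ico_right ht.2)
  have hmono : MonotoneOn (fun s => Afun lam s * (r s (X s) - ρ)) (Icc 0 t) := by
    refine monotoneOn_of_hasDerivWithinAt_nonneg (convex_Icc 0 t)
      ((continuous_Afun lam).continuousOn.mul (hr.sub continuousOn_const))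
      (f' := fun s => lam / 2 * Afun lam s * (-ρ - l s (X s))) ?_ ?_ <;>
      rw [interior_Icc]
    · intro s hs
      have hrs := h.hasDerivAt_r_along hX (Ioo_subset_Ioo_right ht.2.le hs)
      exact (((hasDerivAt_Afun lam s).mul (hrs.sub_const ρ)).congr_deriv
        (by ring)).hasDerivWithinAt
    · exact fun s hs => mul_nonneg
        (mul_nonneg (div_nonneg hlam zero_le_two) (Afun_pos lam s).le)
        (sub_nonneg.2 (hl s (Ioo_subset_Icc_self hs)))
  have hends := hmono (left_mem_Icc.2 ht.1) (right_mem_Icc.2 ht.1) ht.1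
  simp only [Afun_zero, one_mul] at hends
  rw [← le_sub_iff_add_le', inv_mul_le_iff₀ (Afun_pos lam t)]
  exact hends

theorem continuousOn_pfun_along (h : IsDiagonalSolution lam T r l)
    (hX : IsIntegralCurveOn X (charSpeed r l) (Ico 0 T)) :
    ContinuousOn (fun s => pfun lam r l s (X s)) (Ico 0 T) := by
  have hη := continuousOn_along h.continuousOn_etafun hX
  have hκ := (differentiable_kfun.continuous.comp_continuousOn hη).sqrt
  exact ((continuous_Afun lam).continuousOn.mul hκ).mul
    (continuousOn_along h.continuousOn_spaceDeriv_r hX)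

end AlongCharacteristic

end IsDiagonalSolution

end DiagonalSystem

section Blowup

/-- The lower bound `η_L⁺(t, α)` for `η` at time `t` along the forward characteristic from `α`. -/
def etaLower (lam δ : ℝ) (r₀ : ℝ → ℝ) (α t : ℝ) : ℝ :=
  (Afun lam t)⁻¹ * (r₀ (α + 2 * δ * t) + r₀ α)
    + 2 * r₀ (α + 2 * δ * t) * (1 - (Afun lam t)⁻¹)

theorem etaLower_neg (lam δ : ℝ) (r₀ : ℝ → ℝ) (α t : ℝ) :
    etaLower lam δ (-r₀) α t = -etaLower lam δ r₀ α t := by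
  simp only [etaLower, Pi.neg_apply]
  ring

theorem etaLower_nonneg {lam δ α t : ℝ} {r₀ : ℝ → ℝ} (hlam : 0 ≤ lam) (ht : 0 ≤ t)
    (hα : 0 ≤ r₀ α) (hfar : 0 ≤ r₀ (α + 2 * δ * t)) : 0 ≤ etaLower lam δ r₀ α t :=
  add_nonneg (mul_nonneg (inv_pos.2 (Afun_pos lam t)).le (add_nonneg hfar hα))
    (mul_nonneg (mul_nonneg zero_le_two hfar) (sub_nonneg.2 (inv_Afun_le_one hlam ht)))

namespace IsDiagonalSolution

variable {lam T δ tc : ℝ} {r l : ℝ → ℝ → ℝ} {X : ℝ → ℝ}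

theorem min_ffun_le_ffun_along (h : IsDiagonalSolution lam T r l) (hlam : 0 ≤ lam)
    (hinit : ∀ x, l 0 x = -r 0 x) (hX : IsIntegralCurveOn X (charSpeed r l) (Ico 0 T))
    (htc : tc ∈ Ico 0 T)
    (hbound : ∀ s ∈ Icc 0 tc,
      r 0 (X 0 + 2 * δ * tc) ≤ r s (X s) ∧ l s (X s) ≤ -r 0 (X 0 + 2 * δ * tc))
    (hlx : ∀ s ∈ Icc 0 tc, 0 ≤ spaceDeriv l (s, X s)) (hfar : 0 ≤ r 0 (X 0 + 2 * δ * tc))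
    {s : ℝ} (hs : s ∈ Icc 0 tc) :
    min (ffun (etaLower lam δ (r 0) (X 0) tc)) (ffun (2 * r 0 (X 0)))
      ≤ ffun (etafun r l s (X s)) := by
  have hanti := h.antitoneOn_etafun_along hX htc.2 hlx
  have hα : 0 ≤ r 0 (X 0) := hfar.trans (hbound 0 (left_mem_Icc.2 htc.1)).1
  have hfinal : etaLower lam δ (r 0) (X 0) tc ≤ etafun r l tc (X tc) := by
    have hr := h.add_inv_Afun_mul_le_r_along hlam hX htc fun s hs => (hbound s hs).2
    have hl := (hbound tc (right_mem_Icc.2 htc.1)).2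
    rw [etafun, etaLower]
    linarith
  rw [← etafun_eq_two_mul (hinit _)]
  exact min_ffun_le (etaLower_nonneg hlam htc.1 hα hfar)
    (hfinal.trans (hanti hs (right_mem_Icc.2 htc.1) hs.2))
    (hanti (left_mem_Icc.2 htc.1) hs hs.1)

theorem mul_gradient_lt_one_of_le_ffun {m : ℝ} (h : IsDiagonalSolution lam T r l) (hlam : 0 < lam)
    (hX : IsIntegralCurveOn X (charSpeed r l) (Ico 0 T)) (htc : tc ∈ Ico 0 T) (hm : 0 ≤ m)
    (hmle : ∀ s ∈ Icc 0 tc, m ≤ ffun (etafun r l s (X s)))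
    (hlx : ∀ s ∈ Icc 0 tc, 0 ≤ spaceDeriv l (s, X s)) (hα : deriv (r 0) (X 0) < 0) :
    2 / lam * (1 - (Afun lam tc)⁻¹) * m * |deriv (r 0) (X 0)|
      * √(kfun (etafun r l 0 (X 0))) < 1 := by
  have hP0 : pfun lam r l 0 (X 0) = √(kfun (etafun r l 0 (X 0))) * deriv (r 0) (X 0) := by
    rw [pfun, Afun_zero, one_mul]
  have hG (s : ℝ) : HasDerivAt (fun s => -(2 / lam * m) * (Afun lam s)⁻¹) (m * (Afun lam s)⁻¹) s :=
    ((hasDerivAt_inv_Afun lam s).const_mul _).congr_deriv (by field_simp)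
  have hAinv (s : ℝ) : 0 ≤ (Afun lam s)⁻¹ := (inv_pos.2 (Afun_pos lam s)).le
  have hriccati := mul_neg_lt_one_of_riccati htc.1
    ((h.continuousOn_pfun_along hX).mono (Icc_subset_Ico_right htc.2))
    (fun s _ => (hG s).continuousAt.continuousWithinAt)
    (fun s hs => h.hasDerivAt_pfun_along hX (Ioo_subset_Ioo_right htc.2.le hs))
    (fun s _ => hG s) (fun s _ => mul_nonneg hm (hAinv s)) (fun s hs => ?_)
    (hP0 ▸ mul_neg_of_pos_of_neg (sqrt_pos.2 (kfun_pos _)) hα)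
  · rw [hP0, Afun_zero, inv_one] at hriccati
    rw [abs_of_neg hα]
    linarith
  · have hs' := Ioo_subset_Icc_self hs
    have hq : 0 ≤ qfun lam r l s (X s) :=
      mul_nonneg (mul_nonneg (Afun_pos lam s).le (sqrt_nonneg _)) (hlx s hs')
    have hf := mul_le_mul_of_nonneg_right (mul_le_mul_of_nonneg_right (hmle s hs') (hAinv s))
      (sq_nonneg (pfun lam r l s (X s)))
    linarith [mul_nonneg hlam.le hq]

theorem mul_gradient_lt_one_of_pos (h : IsDiagonalSolution lam T r l) (hlam : 0 < lam)
    (hinit : ∀ x, l 0 x = -r 0 x) (hspeed : ∀ t ∈ Ico 0 T, ∀ x, charSpeed r l t x ≤ δ)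
    (hX : IsIntegralCurveOn X (charSpeed r l) (Ico 0 T)) (htc : tc ∈ Ico 0 T)
    (hderiv : ∀ x ∈ Icc (X 0) (X 0 + 2 * δ * tc), deriv (r 0) x < 0)
    (hfar : 0 ≤ r 0 (X 0 + 2 * δ * tc)) :
    2 / lam * (1 - (Afun lam tc)⁻¹)
      * min |ffun (etaLower lam δ (r 0) (X 0) tc)| |ffun (2 * r 0 (X 0))|
      * |deriv (r 0) (X 0)| * √(kfun (2 * r 0 (X 0))) < 1 := by
  set B := X 0 + 2 * δ * tc
  have h0 : (0 : ℝ) ∈ Ico 0 T := ⟨le_rfl, htc.1.trans_lt htc.2⟩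
  have hl0 : l 0 = -r 0 := funext hinit
  have hanti : AntitoneOn (r 0) (Icc (X 0) B) :=
    antitoneOn_of_deriv_nonpos (convex_Icc _ _) (h.differentiable_r h0).continuous.continuousOn
      (h.differentiable_r h0).differentiableOn fun x hx => (hderiv x (interior_subset hx)).le
  have hXB : X 0 ≤ B := by
    have := mul_nonneg ((charSpeed_pos r l 0 0).le.trans (hspeed 0 h0 0)) htc.1
    linarith
  have hmem {s : ℝ} (hs : s ∈ Icc 0 tc) := along_mem_determinacyRegion hX hspeed htc.2 hs
  have hbound : ∀ s ∈ Icc 0 tc, r 0 B ≤ r s (X s) ∧ l s (X s) ≤ -r 0 B := fun s hs => by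
    refine h.le_r_and_l_le_neg hlam.le hX hspeed htc.2 (fun x hx => ?_) (hmem hs)
    have := hanti hx (right_mem_Icc.2 hXB) hx.2
    exact ⟨this, (hinit x).trans_le (neg_le_neg this)⟩
  have hlx : ∀ s ∈ Icc 0 tc, 0 ≤ spaceDeriv l (s, X s) := fun s hs => by
    refine (h.spaceDeriv_r_nonpos_and_l_nonneg hlam.le hX hspeed htc.2 (fun x hx => ?_)
      (hmem hs)).2
    rw [hl0, deriv.neg]
    exact ⟨(hderiv x hx).le, neg_nonneg.2 (hderiv x hx).le⟩
  have hα : 0 ≤ r 0 (X 0) := hfar.trans (hanti (left_mem_Icc.2 hXB) (right_mem_Icc.2 hXB) hXB)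
  have hf := ffun_nonneg (etaLower_nonneg hlam.le htc.1 hα hfar)
  have hf0 := ffun_nonneg (mul_nonneg zero_le_two hα)
  rw [abs_of_nonneg hf, abs_of_nonneg hf0]
  have hlt := h.mul_gradient_lt_one_of_le_ffun hlam hX htc (le_min hf hf0)
    (fun s hs => h.min_ffun_le_ffun_along hlam.le hinit hX htc hbound hlx hfar hs) hlx
    (hderiv _ (left_mem_Icc.2 hXB))
  rwa [etafun_eq_two_mul (hinit _)] at hlt

end IsDiagonalSolution

theorem shock_formation_criterion_general {lam T δ α tc : ℝ} {r l : ℝ → ℝ → ℝ} {X : ℝ → ℝ}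
    (hlam : 0 < lam) (h : IsDiagonalSolution lam T r l) (hinit : ∀ x, l 0 x = -r 0 x)
    (hspeed : ∀ t ∈ Ico 0 T, ∀ x, charSpeed r l t x ≤ δ) (hX0 : X 0 = α)
    (hX : IsIntegralCurveOn X (charSpeed r l) (Ico 0 T)) (htc : 0 ≤ tc)
    (hderiv : ∀ x ∈ Icc α (α + 2 * δ * tc), deriv (r 0) x * r 0 α < 0)
    (hfar : 0 ≤ r 0 (α + 2 * δ * tc) * r 0 α)
    (hcrit : 1 ≤ 2 / lam * (1 - (Afun lam tc)⁻¹)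
      * min |ffun (etaLower lam δ (r 0) α tc)| |ffun (2 * r 0 α)|
      * |deriv (r 0) α| * √(kfun (2 * r 0 α))) : T ≤ tc := by
  by_contra! hT
  subst hX0
  have hmem : tc ∈ Ico 0 T := ⟨htc, hT⟩
  have hδ : 0 ≤ δ := (charSpeed_pos r l tc 0).le.trans (hspeed tc hmem 0)
  have hα := hderiv (X 0) (left_mem_Icc.2 (le_add_of_nonneg_right (by positivity)))
  refine hcrit.not_gt ?_
  rcases lt_or_gt_of_ne (right_ne_zero_of_mul hα.ne) with hneg | hpos
  · have hlt := h.neg.mul_gradient_lt_one_of_pos (δ := δ) (X := X) hlam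
      (fun x => congrArg Neg.neg (hinit x)) (by rwa [charSpeed_neg]) (by rwa [charSpeed_neg]) hmem
      (fun x hx => ?_) ?_
    · simpa only [Pi.neg_apply, etaLower_neg, mul_neg, ffun_neg, kfun_neg, abs_neg, deriv.neg]
        using hlt
    · rw [Pi.neg_apply, deriv.neg]
      exact neg_neg_of_pos (pos_of_mul_neg_left (hderiv x hx) hneg.le)
    · exact neg_nonneg.2 (nonpos_of_mul_nonneg_left hfar hneg)
  · exact h.mul_gradient_lt_one_of_pos hlam hinit hspeed hX hmem
      (fun x hx => neg_of_mul_neg_left (hderiv x hx) hpos.le)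
      (nonneg_of_mul_nonneg_left hfar hpos)

end Blowup

/-- main shock-formation criterion: under the stated conditions on
the initial Riemann function `r₀` at some `α`, if the critical-time equation has a
root `t_c > 0` and the selection inequality holds on `[0, t_c]`, then a singularity
forms by time `t_c`: no `C²` solution of the diagonal system with initial data
`(r₀, −r₀)` — satisfying the a priori bound and admitting jointly `C¹`
characteristic flows with positive compression ratios and a `C¹` correspondence
map — can exist on `[0,T) × ℝ` for any `T > t_c`. -/
theorem shock_formation_criterion
    (lam : ℝ) (hlam : 0 < lam)
    (r₀ : ℝ → ℝ)
    (hr₀reg : ContDiff ℝ 1 r₀)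
    (hr₀bdd : ∃ C : ℝ, ∀ x : ℝ, |r₀ x| ≤ C)
    (hr₀'bdd : ∃ C : ℝ, ∀ x : ℝ, |deriv r₀ x| ≤ C)
    (rinf : ℝ) (hrinf : Filter.Tendsto r₀ Filter.atTop (nhds rinf))
    (δ : ℝ) (hδ : δ = kfun (2 * ⨆ z : ℝ, |r₀ z|))
    (α : ℝ)
    -- conditions on the initial profile at α
    (hcond₁ : deriv r₀ α * (r₀ α + rinf) < 0)
    (hcond₂ : ∀ x : ℝ, α ≤ x → deriv r₀ x * r₀ α < 0)
    (hcond₃ : 0 < r₀ α * rinf ∨ rinf = 0)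
    -- the explicit lower bound η_L⁺ and the quantity γ⁺
    (etaLp : ℝ → ℝ)
    (hetaLp : ∀ t : ℝ, etaLp t = (Afun lam t)⁻¹ * (r₀ (α + 2*δ*t) + r₀ α)
      + 2 * r₀ (α + 2*δ*t) * (1 - (Afun lam t)⁻¹))
    (γp : ℝ → ℝ)
    (hγp : ∀ t : ℝ, γp t = min |ffun (etaLp t)| |ffun (2 * r₀ α)|)
    -- existence of a root t_c of the critical-time equation
    (tc : ℝ) (htc : 0 < tc)
    (hroot : 1 - (2/lam) * (1 - (Afun lam tc)⁻¹) * γp tc * |deriv r₀ α| *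
      Real.sqrt (kfun (2 * r₀ α)) = 0)
    -- the selection inequality on [0, t_c]
    (hsel : ∀ t ∈ Set.Icc (0:ℝ) tc,
      0 ≤ -2 * (Afun lam t - 1) / Real.sqrt (kfun (etaLp t))
        + (2 - (Afun lam t)⁻¹) / Real.sqrt (kfun (2 * r₀ α))) :
    ∀ T : ℝ, tc < T →
      ¬ ∃ (r l x₁ x₂ : ℝ → ℝ → ℝ) (bmap : ℝ → ℝ → ℝ),
        -- C² solution of the diagonal system on [0,T) × ℝ
        ContDiffOn ℝ 2 (Function.uncurry r) (Set.Ico 0 T ×ˢ (Set.univ : Set ℝ)) ∧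
        ContDiffOn ℝ 2 (Function.uncurry l) (Set.Ico 0 T ×ˢ (Set.univ : Set ℝ)) ∧
        (∀ t ∈ Set.Ico (0:ℝ) T, ∀ x : ℝ,
          deriv (fun s => r s x) t + kfun (etafun r l t x) * deriv (fun y => r t y) x
            = -(lam/2) * (r t x + l t x)) ∧
        (∀ t ∈ Set.Ico (0:ℝ) T, ∀ x : ℝ,
          deriv (fun s => l s x) t - kfun (etafun r l t x) * deriv (fun y => l t y) x
            = -(lam/2) * (r t x + l t x)) ∧
        -- initial data (r₀, −r₀)
        (∀ x : ℝ, r 0 x = r₀ x) ∧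
        (∀ x : ℝ, l 0 x = -r₀ x) ∧
        -- a priori bound
        (∀ t ∈ Set.Ico (0:ℝ) T, ∀ x y : ℝ,
          |r t x - l t y| ≤ 2 * ⨆ z : ℝ, |r₀ z|) ∧
        -- jointly C¹ characteristic flows
        ContDiffOn ℝ 1 (Function.uncurry x₁) (Set.Ico 0 T ×ˢ (Set.univ : Set ℝ)) ∧
        ContDiffOn ℝ 1 (Function.uncurry x₂) (Set.Ico 0 T ×ˢ (Set.univ : Set ℝ)) ∧
        (∀ a : ℝ, x₁ 0 a = a) ∧
        (∀ a : ℝ, ∀ t ∈ Set.Ico (0:ℝ) T,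
          HasDerivAt (fun s => x₁ s a) (kfun (etafun r l t (x₁ t a))) t) ∧
        (∀ b : ℝ, x₂ 0 b = b) ∧
        (∀ b : ℝ, ∀ t ∈ Set.Ico (0:ℝ) T,
          HasDerivAt (fun s => x₂ s b) (-(kfun (etafun r l t (x₂ t b)))) t) ∧
        -- positive compression ratios
        (∀ t ∈ Set.Ico (0:ℝ) T, ∀ a : ℝ, 0 < deriv (fun a' => x₁ t a') a) ∧
        (∀ t ∈ Set.Ico (0:ℝ) T, ∀ b : ℝ, 0 < deriv (fun b' => x₂ t b') b) ∧
        -- C¹ correspondence map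
        ContDiffOn ℝ 1 (Function.uncurry bmap) (Set.Ico 0 T ×ˢ (Set.univ : Set ℝ)) ∧
        (∀ t ∈ Set.Ico (0:ℝ) T, ∀ a : ℝ, x₁ t a = x₂ t (bmap t a)) := by
  rintro T hT ⟨r, l, x₁, -, -, hr, hl, heqr, heql, hr0, hl0, hbound, -, -, hx₁0, hx₁, -⟩
  obtain rfl : r 0 = r₀ := funext hr0
  have hsol : IsDiagonalSolution lam T r l :=
    ⟨hr, hl, fun t ht => heqr t (Ioo_subset_Ico_self ht),
      fun t ht => heql t (Ioo_subset_Ico_self ht)⟩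
  have hspeed : ∀ t ∈ Ico 0 T, ∀ x, charSpeed r l t x ≤ δ := fun t ht x =>
    hδ ▸ kfun_le_kfun_of_abs_le (hbound t ht x x)
  have hfar : 0 ≤ r 0 (α + 2 * δ * tc) * r 0 α := by
    have hδ0 : 0 ≤ δ := hδ ▸ (kfun_pos _).le
    have hdiff : Differentiable ℝ fun x => r 0 x * r 0 α :=
      (hr₀reg.differentiable one_ne_zero).mul_const _
    refine le_trans ?_ (le_of_deriv_nonpos_of_tendsto hdiff.differentiableOn (fun x hx => ?_)
      (hrinf.mul_const (r 0 α)) (le_add_of_nonneg_right (a := α) (by positivity)))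
    · rcases hcond₃ with hpos | rfl
      · exact (mul_comm (r 0 α) rinf ▸ hpos).le
      · rw [zero_mul]
    · rw [deriv_mul_const_field]
      exact (hcond₂ x (le_of_lt hx)).le
  refine hT.not_ge (shock_formation_criterion_general (X := fun s => x₁ s α) hlam hsol hl0 hspeed
    (hx₁0 α) (fun t ht => (hx₁ α t ht).hasDerivWithinAt) htc.le (fun x hx => hcond₂ x hx.1) hfar ?_)
  have hcrit := (sub_eq_zero.1 hroot).le
  rwa [hγp, hetaLp] at hcrit
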